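/- For s ∈ {0,1,…,n−2} and 1 ≤ g ≤ min{s+1, ⌊(n−s)/2⌋}, the pair sum satisfies c_{s,g} = C(s+1, g) · (n! / (2n−s)!) · Σ_{x ∈ 𝒞(n−s, g; 2)} ∏_{i=1}^{g} w_{x_i} · C(2x_i, x_i), where 𝒞(N, j; 2) is the set of compositions (x_1,…,x_j) of N into j nonnegative integer parts each at least 2, and w_m is the number of direct paths from ∅ to [m] in the m-dimensional hypercube that are edge-disjoint from the canonical path π_m (with w_0 = 1). -/

import Mathlib

open MeasureTheory Filter

namespace RandomHypercube

/-- Index of a (potential) hypercube edge: the lower endpoint `A` together with the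
direction `i` that is added, representing the edge from `A` to `A ∪ {i}`. -/
abbrev EdgeIdx (n : ℕ) := Finset (Fin n) × Fin n

/-- The sample space: an i.i.d. Uniform[0,1] weight for each edge index. -/
abbrev CubeOmega (n : ℕ) := EdgeIdx n → ℝ

/-- The product of uniform measures on [0,1], one for each edge. -/
noncomputable def cubeMeasure (n : ℕ) : Measure (CubeOmega n) :=
  Measure.pi fun _ => (volume : Measure ℝ).restrict (Set.Icc 0 1)

/-- The vertex visited by the direct path associated to the permutation `σ`
just before taking its `j`-th step: the image under `σ` of `{0, …, j-1}`. -/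
def initSeg (n : ℕ) (σ : Equiv.Perm (Fin n)) (j : Fin n) : Finset (Fin n) :=
  (Finset.univ.filter fun i => i < j).image σ

/-- The edge used in the `j`-th step of the direct path associated to `σ`. -/
def pathEdge (n : ℕ) (σ : Equiv.Perm (Fin n)) (j : Fin n) : EdgeIdx n :=
  (initSeg n σ j, σ j)

/-- The direct path associated to `σ` is accessible if its successive edge
weights are strictly increasing. -/
def Accessible (n : ℕ) (σ : Equiv.Perm (Fin n)) (ω : CubeOmega n) : Prop :=
  StrictMono fun j : Fin n => ω (pathEdge n σ j)

/-- The number of accessible direct paths from `∅` to `[n]`. -/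
noncomputable def X (n : ℕ) (ω : CubeOmega n) : ℕ :=
  Nat.card {σ : Equiv.Perm (Fin n) // Accessible n σ ω}


/-- The set of steps `j` at which the direct paths of `σ` and `σ'` use the same edge
(shared edges necessarily occur at the same level in both paths). -/
def sharedSteps (n : ℕ) (σ σ' : Equiv.Perm (Fin n)) : Finset (Fin n) :=
  Finset.univ.filter fun j => pathEdge n σ j = pathEdge n σ' j

/-- Given the sorted list `l` of steps (levels) of the shared edges, the gap vector:
the number of edges before the first shared edge, strictly between consecutive shared
edges, and after the last shared edge. -/
def gapsOfList (n : ℕ) (l : List ℕ) : List ℕ :=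
  List.zipWith (fun a b => b - a) (0 :: l.map (· + 1)) (l ++ [n])

/-- The gap vector of the direct path of `σ'` relative to that of `σ`. -/
def gapVector (n : ℕ) (σ σ' : Equiv.Perm (Fin n)) : List ℕ :=
  gapsOfList n (((sharedSteps n σ σ').sort (· ≤ ·)).map Fin.val)

/-- The number of (nontrivial) gaps between the direct paths of `σ` and `σ'`:
the number of nonzero entries of the gap vector. -/
def numGaps (n : ℕ) (σ σ' : Equiv.Perm (Fin n)) : ℕ :=
  ((gapVector n σ σ').filter (· != 0)).length

/-- The probability that the direct paths of `σ` and `σ'` are both accessible. -/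
noncomputable def pairProb (n : ℕ) (σ σ' : Equiv.Perm (Fin n)) : ℝ :=
  (cubeMeasure n {ω | Accessible n σ ω ∧ Accessible n σ' ω}).toReal

/-- `c n s g`: the sum, over all ordered pairs of direct paths sharing exactly `s`
edges with `g` gaps, of the probability that both paths are accessible. -/
noncomputable def c (n s g : ℕ) : ℝ :=
  ∑ p ∈ Finset.univ.filter
      (fun p : Equiv.Perm (Fin n) × Equiv.Perm (Fin n) =>
        (sharedSteps n p.1 p.2).card = s ∧ numGaps n p.1 p.2 = g),
    pairProb n p.1 p.2

/-- `w m`: the number of direct paths from `∅` to `[m]` in the `m`-dimensional hypercube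
that are edge-disjoint from the canonical path (the identity permutation). -/
noncomputable def w (m : ℕ) : ℕ :=
  Nat.card {σ : Equiv.Perm (Fin m) // sharedSteps m σ 1 = ∅}

end RandomHypercube

/-! Two paths can share an edge only at equal levels. Conditioning on the weights of the shared
edges, a gap of length `x` requires two independent increasing `x`-tuples in the same interval,
which is `(2 * x).choose x` times as likely as one increasing `2 * x`-tuple. So, up to the product
of these binomial coefficients, the pair is accessible with the probability `1 / (2 * n - s)!` of a
single increasing chain of length `2 * n - s`. The relative permutation of a pair splits at the
shared steps into blocks that share no edge with the identity, so a given gap vector is attained by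
`n! * ∏ w x` pairs. As `w 0 = 1` and `w 1 = 0`, summing over gap vectors with `g` nonzero entries
amounts to choosing their positions among `s + 1` and a composition of `n - s` into `g` parts `≥ 2`.
-/

namespace RandomHypercube

section ProductMeasure

open ProbabilityTheory

variable {ι κ : Type*} [Fintype ι] [Fintype κ] {E : ι → Type*} [∀ i, MeasurableSpace (E i)]
  (μ : ∀ i, Measure (E i)) [∀ i, IsProbabilityMeasure (μ i)]

theorem measurePreserving_pi_precomp {e : κ → ι} (he : Function.Injective e) :
    MeasurePreserving (fun (ω : ∀ i, E i) (k : κ) => ω (e k))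
      (Measure.pi μ) (Measure.pi fun k => μ (e k)) := by
  have hindep : iIndepFun (fun k (ω : ∀ i, E i) => ω (e k)) (Measure.pi μ) :=
    (iIndepFun_pi (X := fun _ => id) fun _ => aemeasurable_id).precomp he
  refine ⟨by fun_prop, ?_⟩
  rw [(iIndepFun_iff_map_fun_eq_pi_map
    fun k => (measurable_pi_apply (e k)).aemeasurable).1 hindep]
  simp only [(measurePreserving_eval μ _).map_eq]

theorem measurePreserving_piecewise (s : Set ι) [DecidablePred (· ∈ s)] :
    MeasurePreserving (fun p : (∀ i, E i) × (∀ i, E i) => s.piecewise p.1 p.2)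
      ((Measure.pi μ).prod (Measure.pi μ)) (Measure.pi μ) := by
  have hmeas : Measurable fun p : (∀ i, E i) × (∀ i, E i) => s.piecewise p.1 p.2 :=
    measurable_pi_lambda _ fun i => by
      by_cases hi : i ∈ s <;> simp only [hi, Set.piecewise, if_true, if_false] <;> fun_prop
  refine ⟨hmeas, (Measure.pi_eq fun t ht => ?_).symm⟩
  have hpre : (fun p : (∀ i, E i) × (∀ i, E i) => s.piecewise p.1 p.2) ⁻¹' Set.univ.pi t =
      Set.univ.pi (s.piecewise t fun _ => Set.univ) ×ˢ
        Set.univ.pi (s.piecewise (fun _ => Set.univ) t) := by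
    ext p
    simp only [Set.mem_preimage, Set.mem_prod, Set.mem_univ_pi, ← forall_and]
    refine forall_congr' fun i => ?_
    by_cases hi : i ∈ s <;> simp [hi]
  rw [Measure.map_apply hmeas (.univ_pi ht), hpre, Measure.prod_prod, Measure.pi_pi,
    Measure.pi_pi, ← Finset.prod_mul_distrib]
  refine Finset.prod_congr rfl fun i _ => ?_
  by_cases hi : i ∈ s <;> simp [hi]

theorem pi_inter_eq_mul_of_dependsOn {s t : Set ι} (hst : Disjoint s t) {A B : Set (∀ i, E i)}
    (hA : MeasurableSet A) (hB : MeasurableSet B)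
    (hAs : DependsOn (· ∈ A) s) (hBt : DependsOn (· ∈ B) t) :
    Measure.pi μ (A ∩ B) = Measure.pi μ A * Measure.pi μ B := by
  classical
  rw [← (measurePreserving_piecewise μ s).measure_preimage (hA.inter hB).nullMeasurableSet,
    ← Measure.prod_prod]
  congr 1
  ext p
  have hpA : (s.piecewise p.1 p.2 ∈ A) = (p.1 ∈ A) :=
    hAs fun i hi => Set.piecewise_eq_of_mem _ _ _ hi
  have hpB : (s.piecewise p.1 p.2 ∈ B) = (p.2 ∈ B) :=
    hBt fun i hi => Set.piecewise_eq_of_notMem _ _ _ (hst.notMem_of_mem_right hi)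
  simp only [Set.mem_preimage, Set.mem_inter_iff, Set.mem_prod, hpA, hpB]

theorem pi_eq_lintegral_update [DecidableEq ι] (i : ι) {A : Set (∀ i, E i)}
    (hA : MeasurableSet A) :
    Measure.pi μ A = ∫⁻ z, Measure.pi μ {ω | Function.update ω i z ∈ A} ∂μ i := by
  have hupdate : Measurable fun p : E i × (∀ i, E i) => Function.update p.2 i p.1 :=
    measurable_pi_lambda _ fun j => by
      by_cases hj : j = i
      · subst hj; simpa using measurable_fst
      · simp only [Function.update_of_ne hj]; fun_prop
  have hpiecewise (ω ω' : ∀ j, E j) :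
      ({i} : Set ι).piecewise ω ω' = Function.update ω' i (ω i) := by
    ext j
    by_cases hj : j = i
    · subst hj; simp
    · simp [hj]
  rw [← (measurePreserving_piecewise μ {i}).measure_preimage hA.nullMeasurableSet,
    Measure.prod_apply ((measurePreserving_piecewise μ {i}).measurable hA)]
  simp only [← Set.preimage_comp, Function.comp_def, hpiecewise]
  exact (measurePreserving_eval μ i).lintegral_comp
    (f := fun z => Measure.pi μ {ω | Function.update ω i z ∈ A})
    (measurable_measure_prodMk_left (hupdate hA))

theorem pi_eq_setLIntegral_of_update_mem_iff [DecidableEq ι] {i : ι} {A : Set (∀ i, E i)}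
    (hA : MeasurableSet A) {s : Set (E i)} (hs : MeasurableSet s) {B : E i → Set (∀ i, E i)}
    (hAB : ∀ ω z, Function.update ω i z ∈ A ↔ z ∈ s ∧ ω ∈ B z) :
    Measure.pi μ A = ∫⁻ z in s, Measure.pi μ (B z) ∂μ i := by
  rw [pi_eq_lintegral_update μ i hA, ← lintegral_indicator hs]
  refine lintegral_congr fun z => ?_
  by_cases hz : z ∈ s <;> simp [hAB, hz]

end ProductMeasure

section Pivot

/-- The index separating the first `a` indices of `Fin (a + 1 + b)` from the last `b`. -/
def pivot (a b : ℕ) : Fin (a + 1 + b) := Fin.castAdd b (Fin.last a)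

/-- The inclusion of `Fin a` as the indices of `Fin (a + 1 + b)` below the pivot. -/
def beforePivot (a b : ℕ) (i : Fin a) : Fin (a + 1 + b) := Fin.castAdd b i.castSucc

/-- The inclusion of `Fin b` as the indices of `Fin (a + 1 + b)` above the pivot. -/
def afterPivot (a b : ℕ) (j : Fin b) : Fin (a + 1 + b) := Fin.natAdd (a + 1) j

variable {a b : ℕ}

@[simp] theorem val_pivot : (pivot a b : ℕ) = a := rfl

@[simp] theorem val_beforePivot (i : Fin a) : (beforePivot a b i : ℕ) = i := rfl

@[simp] theorem val_afterPivot (j : Fin b) : (afterPivot a b j : ℕ) = a + 1 + j := rfl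

theorem beforePivot_injective : Function.Injective (beforePivot a b) :=
  (Fin.castAdd_injective _ b).comp (Fin.castSucc_injective a)

theorem afterPivot_injective : Function.Injective (afterPivot a b) :=
  Fin.natAdd_injective b (a + 1)

theorem pivot_notMem_range_beforePivot : pivot a b ∉ Set.range (beforePivot a b) := by
  rintro ⟨i, hi⟩
  exact i.2.ne (Fin.ext_iff.1 hi)

theorem pivot_notMem_range_afterPivot : pivot a b ∉ Set.range (afterPivot a b) := by
  rintro ⟨j, hj⟩
  have := Fin.ext_iff.1 hj
  simp only [val_pivot, val_afterPivot] at this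
  omega

theorem disjoint_range_beforePivot_afterPivot :
    Disjoint (Set.range (beforePivot a b)) (Set.range (afterPivot a b)) := by
  rw [Set.disjoint_range_iff]
  intro i j h
  have := Fin.ext_iff.1 h
  simp only [val_beforePivot, val_afterPivot] at this
  omega

theorem forall_fin_pivot {P : Fin (a + 1 + b) → Prop} :
    (∀ k, P k) ↔ (∀ i, P (beforePivot a b i)) ∧ P (pivot a b) ∧ ∀ j, P (afterPivot a b j) := by
  rw [Fin.forall_fin_add, Fin.forall_fin_succ', and_assoc]
  rfl

end Pivot

section IncreasingTuples

/-- The uniform distribution on `[0, 1]`, the law of a single edge weight. -/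
noncomputable def uniform01 : Measure ℝ := volume.restrict (Set.Icc 0 1)

instance : IsProbabilityMeasure uniform01 := ⟨by simp [uniform01]⟩

/-- The strictly increasing `n`-tuples with entries in the open interval `(t, y)`. -/
def increasingTuples (n : ℕ) (t y : ℝ) : Set (Fin n → ℝ) :=
  {u | StrictMono u ∧ ∀ i, u i ∈ Set.Ioo t y}

theorem measurableSet_increasingTuples (n : ℕ) (t y : ℝ) :
    MeasurableSet (increasingTuples n t y) := by
  simp only [increasingTuples, StrictMono, Set.mem_Ioo, measurableSet_setOfPred]
  fun_prop

theorem mem_increasingTuples_pivot {a b : ℕ} {t y : ℝ} {u : Fin (a + 1 + b) → ℝ} :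
    u ∈ increasingTuples (a + 1 + b) t y ↔
      u (pivot a b) ∈ Set.Ioo t y ∧
      u ∘ beforePivot a b ∈ increasingTuples a t (u (pivot a b)) ∧
      u ∘ afterPivot a b ∈ increasingTuples b (u (pivot a b)) y := by
  simp only [increasingTuples, StrictMono, Set.mem_ofPred_eq, Function.comp_apply, Set.mem_Ioo]
  simp only [forall_fin_pivot, Fin.lt_def, val_pivot, val_beforePivot, val_afterPivot]
  grind

theorem update_mem_increasingTuples_pivot {a b : ℕ} {t y z : ℝ} {u : Fin (a + 1 + b) → ℝ} :
    Function.update u (pivot a b) z ∈ increasingTuples (a + 1 + b) t y ↔ z ∈ Set.Ioo t y ∧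
      u ∈ {u | u ∘ beforePivot a b ∈ increasingTuples a t z} ∩
        {u | u ∘ afterPivot a b ∈ increasingTuples b z y} := by
  rw [mem_increasingTuples_pivot, Function.update_self,
    Function.update_comp_eq_of_notMem_range _ _ pivot_notMem_range_beforePivot,
    Function.update_comp_eq_of_notMem_range _ _ pivot_notMem_range_afterPivot]
  rfl

theorem dependsOn_comp_mem {ι κ : Type*} (e : κ → ι) (S : Set (κ → ℝ)) :
    DependsOn (· ∈ {ω : ι → ℝ | ω ∘ e ∈ S}) (Set.range e) := fun ω ω' h => by
  have : ω ∘ e = ω' ∘ e := funext fun k => h _ ⟨k, rfl⟩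
  simp only [Set.mem_ofPred_eq, this]

theorem measurableSet_comp_mem_increasingTuples {ι : Type*} {n : ℕ} (e : Fin n → ι) (t y : ℝ) :
    MeasurableSet {ω : ι → ℝ | ω ∘ e ∈ increasingTuples n t y} :=
  (measurable_pi_lambda (fun (ω : ι → ℝ) k => ω (e k)) fun _ => measurable_pi_apply _)
    (measurableSet_increasingTuples n t y)

variable {ι : Type*} [Fintype ι] (μ : Measure ℝ) [IsProbabilityMeasure μ]

theorem pi_comp_mem_increasingTuples {n : ℕ} {e : Fin n → ι} (he : Function.Injective e)
    (t y : ℝ) :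
    Measure.pi (fun _ : ι => μ) {ω | ω ∘ e ∈ increasingTuples n t y} =
      Measure.pi (fun _ => μ) (increasingTuples n t y) :=
  (measurePreserving_pi_precomp (fun _ => μ) he).measure_preimage
    (measurableSet_increasingTuples n t y).nullMeasurableSet

theorem pi_increasingTuples_pivot (a b : ℕ) (t y : ℝ) :
    Measure.pi (fun _ => μ) (increasingTuples (a + 1 + b) t y) =
      ∫⁻ z in Set.Ioo t y, Measure.pi (fun _ => μ) (increasingTuples a t z) *
        Measure.pi (fun _ => μ) (increasingTuples b z y) ∂μ := by
  rw [pi_eq_setLIntegral_of_update_mem_iff _ (measurableSet_increasingTuples _ t y)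
    measurableSet_Ioo fun ω z => update_mem_increasingTuples_pivot]
  refine lintegral_congr fun z => ?_
  rw [← pi_comp_mem_increasingTuples μ (beforePivot_injective (a := a) (b := b)),
    ← pi_comp_mem_increasingTuples μ (afterPivot_injective (a := a) (b := b))]
  exact pi_inter_eq_mul_of_dependsOn _ disjoint_range_beforePivot_afterPivot
    (measurableSet_comp_mem_increasingTuples _ _ _)
    (measurableSet_comp_mem_increasingTuples _ _ _) (dependsOn_comp_mem _ _)
    (dependsOn_comp_mem _ _)

theorem lintegral_uniform01_Ioo_ofReal {f : ℝ → ℝ} (hf : Continuous f) {t y : ℝ} (ht : 0 ≤ t)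
    (hty : t ≤ y) (hy : y ≤ 1) (hpos : ∀ z ∈ Set.Ioo t y, 0 ≤ f z) :
    ∫⁻ z in Set.Ioo t y, ENNReal.ofReal (f z) ∂uniform01 = ENNReal.ofReal (∫ z in t..y, f z) := by
  have hsub : Set.Ioo t y ⊆ Set.Icc 0 1 :=
    Set.Ioo_subset_Icc_self.trans (Set.Icc_subset_Icc ht hy)
  rw [uniform01, Measure.restrict_restrict measurableSet_Ioo, Set.inter_eq_left.2 hsub,
    intervalIntegral.integral_of_le hty, ← restrict_Ioo_eq_restrict_Ioc,
    ofReal_integral_eq_lintegral_ofReal]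
  · exact hf.integrableOn_Icc.mono_set Set.Ioo_subset_Icc_self
  · exact (ae_restrict_mem measurableSet_Ioo).mono hpos

theorem uniform01_increasingTuples (n : ℕ) {t y : ℝ} (ht : 0 ≤ t) (hty : t ≤ y) (hy : y ≤ 1) :
    Measure.pi (fun _ => uniform01) (increasingTuples n t y) =
      ENNReal.ofReal ((y - t) ^ n / n.factorial) := by
  induction n generalizing y with
  | zero =>
    rw [show increasingTuples 0 t y = Set.univ by ext; simp [increasingTuples, StrictMono]]
    simp
  | succ n ih =>
    have hnil (z : ℝ) : increasingTuples 0 z y = Set.univ := by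
      ext; simp [increasingTuples, StrictMono]
    calc Measure.pi (fun _ => uniform01) (increasingTuples (n + 1 + 0) t y)
        = ∫⁻ z in Set.Ioo t y, ENNReal.ofReal ((z - t) ^ n / n.factorial) ∂uniform01 := by
          rw [pi_increasingTuples_pivot]
          refine setLIntegral_congr_fun measurableSet_Ioo fun z hz => ?_
          simp only [ih hz.1.le (hz.2.le.trans hy), hnil, measure_univ, mul_one]
      _ = ENNReal.ofReal (∫ z in t..y, (z - t) ^ n / n.factorial) :=
          lintegral_uniform01_Ioo_ofReal (by fun_prop) ht hty hy fun z hz =>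
            div_nonneg (pow_nonneg (sub_nonneg.2 hz.1.le) n) n.factorial.cast_nonneg
      _ = ENNReal.ofReal ((y - t) ^ (n + 1) / (n + 1).factorial) := by
          congr 1
          rw [intervalIntegral.integral_div, intervalIntegral.integral_comp_sub_right (· ^ n),
            integral_pow, Nat.factorial_succ]
          push_cast
          simp
          field_simp

theorem uniform01_increasingTuples_sq (x : ℕ) {t y : ℝ} (ht : 0 ≤ t) (hty : t ≤ y) (hy : y ≤ 1) :
    Measure.pi (fun _ => uniform01) (increasingTuples x t y) ^ 2 =
      (2 * x).choose x * Measure.pi (fun _ => uniform01) (increasingTuples (2 * x) t y) := by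
  have hfact : ((2 * x).choose x : ℝ) * x.factorial * x.factorial = (2 * x).factorial := by
    have := Nat.choose_mul_factorial_mul_factorial (show x ≤ 2 * x by omega)
    rw [show 2 * x - x = x by omega] at this
    exact_mod_cast this
  rw [uniform01_increasingTuples x ht hty hy, uniform01_increasingTuples (2 * x) ht hty hy,
    ← ENNReal.ofReal_pow (by have := sub_nonneg.2 hty; positivity), ← ENNReal.ofReal_natCast,
    ← ENNReal.ofReal_mul (Nat.cast_nonneg _), ← hfact]
  congr 1
  have hchoose : ((2 * x).choose x : ℝ) ≠ 0 := by
    exact_mod_cast (Nat.choose_pos (show x ≤ 2 * x by omega)).ne'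
  field_simp
  ring

end IncreasingTuples

section GapPattern

/-- `IsGapPattern n T L`: the list `L` consists of the number of elements of `{0, …, n - 1}` lying
before the first element of `T`, strictly between consecutive elements of `T`, and after the last
element of `T`. It is the inductive counterpart of `gapsOfList`. -/
inductive IsGapPattern : ℕ → Set ℕ → List ℕ → Prop
  | nil {n : ℕ} {T : Set ℕ} (free : ∀ k < n, k ∉ T) : IsGapPattern n T [n]
  | cons {x m : ℕ} {T : Set ℕ} {L : List ℕ} (free : ∀ k < x, k ∉ T) (shared : x ∈ T)
      (tail : IsGapPattern m ((x + 1 + ·) ⁻¹' T) L) : IsGapPattern (x + 1 + m) T (x :: L)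

namespace IsGapPattern

variable {n : ℕ} {T : Set ℕ} {L L' : List ℕ}

theorem sum_add_length (h : IsGapPattern n T L) : L.sum + L.length = n + 1 := by
  induction h with
  | nil => simp
  | cons _ _ _ ih => simp only [List.sum_cons, List.length_cons]; omega

theorem ne_nil (h : IsGapPattern n T L) : L ≠ [] := by
  cases h <;> exact List.cons_ne_nil _ _

theorem unique (h : IsGapPattern n T L) (h' : IsGapPattern n T L') : L = L' := by
  induction h generalizing L' with
  | nil free =>
    cases h' with
    | nil => rfl
    | cons _ shared => exact absurd shared (free _ (by omega))
  | @cons x m T L free shared _ ih =>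
    generalize hn : x + 1 + m = n at h'
    cases h' with
    | nil free' => exact absurd shared (free' x (by omega))
    | @cons x' m' _ L' free' shared' tail' =>
      obtain rfl : x = x' := le_antisymm (not_lt.1 fun hlt => free _ hlt shared')
        (not_lt.1 fun hlt => free' _ hlt shared)
      obtain rfl : m = m' := by omega
      rw [ih tail']

end IsGapPattern

theorem isGapPattern_singleton_iff {n x : ℕ} {T : Set ℕ} :
    IsGapPattern n T [x] ↔ x = n ∧ ∀ k < n, k ∉ T := by
  refine ⟨fun h => ?_, fun ⟨hx, free⟩ => hx ▸ .nil (hx ▸ free)⟩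
  cases h with
  | nil free => exact ⟨rfl, free⟩
  | cons _ _ tail => exact absurd rfl tail.ne_nil

theorem isGapPattern_cons_iff {x m : ℕ} {T : Set ℕ} {L : List ℕ} :
    IsGapPattern (x + 1 + m) T (x :: L) ↔
      (∀ k < x, k ∉ T) ∧ x ∈ T ∧ IsGapPattern m ((x + 1 + ·) ⁻¹' T) L := by
  refine ⟨fun h => ?_, fun ⟨free, shared, tail⟩ => .cons free shared tail⟩
  generalize hn : x + 1 + m = n at h
  cases h with
  | nil => omega
  | @cons _ m' _ _ free shared tail =>
    obtain rfl : m = m' := by omega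
    exact ⟨free, shared, tail⟩

theorem isGapPattern_zipWith {l : List ℕ} (hl : l.Pairwise (· < ·)) {b e : ℕ}
    (hbe : ∀ a ∈ l, b ≤ a ∧ a < e) :
    IsGapPattern (e - b) {k | b + k ∈ l}
      (List.zipWith (fun a c => c - a) (b :: l.map (· + 1)) (l ++ [e])) := by
  induction l generalizing b with
  | nil => exact .nil fun _ _ => List.not_mem_nil
  | cons a l ih =>
    obtain ⟨hal, hl⟩ := List.pairwise_cons.1 hl
    obtain ⟨hba, hae⟩ := hbe a List.mem_cons_self
    have htail := ih hl (b := a + 1) fun c hc => ⟨hal c hc, (hbe c (List.mem_cons_of_mem a hc)).2⟩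
    have hshift : (a - b + 1 + ·) ⁻¹' {k | b + k ∈ a :: l} = {k | a + 1 + k ∈ l} := by
      ext k
      have hk : b + (a - b + 1 + k) = a + 1 + k := by omega
      have hne : a + 1 + k ≠ a := by omega
      simp only [Set.mem_preimage, Set.mem_ofPred_eq, hk, List.mem_cons, hne, false_or]
    have hlen : e - b = a - b + 1 + (e - (a + 1)) := by omega
    rw [hlen]
    refine .cons (fun k hk hmem => ?_) ?_ (hshift ▸ htail)
    · obtain hka | hkl := List.mem_cons.1 hmem
      · omega
      · have := hal _ hkl
        omega
    · simp [Nat.add_sub_cancel' hba]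

/-- The levels at which the paths of `σ` and `σ'` use the same edge, as a set of natural numbers. -/
def sharedLevels (n : ℕ) (σ σ' : Equiv.Perm (Fin n)) : Set ℕ :=
  Fin.val '' (sharedSteps n σ σ' : Set (Fin n))

theorem val_mem_sharedLevels {n : ℕ} {σ σ' : Equiv.Perm (Fin n)} {j : Fin n} :
    (j : ℕ) ∈ sharedLevels n σ σ' ↔ j ∈ sharedSteps n σ σ' := by
  simp only [sharedLevels, Fin.val_injective.mem_set_image, Finset.mem_coe]

theorem isGapPattern_gapVector (n : ℕ) (σ σ' : Equiv.Perm (Fin n)) :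
    IsGapPattern n (sharedLevels n σ σ') (gapVector n σ σ') := by
  have hlt : (((sharedSteps n σ σ').sort (· ≤ ·)).map Fin.val).Pairwise (· < ·) :=
    List.pairwise_map.2 (Finset.sortedLT_sort _).pairwise
  have hlevels : {k | 0 + k ∈ ((sharedSteps n σ σ').sort (· ≤ ·)).map Fin.val} =
      sharedLevels n σ σ' := by
    ext k
    simp [sharedLevels]
  exact hlevels ▸ isGapPattern_zipWith hlt (b := 0) (e := n) (by simp)

theorem gapVector_eq_iff {n : ℕ} {σ σ' : Equiv.Perm (Fin n)} {L : List ℕ} :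
    gapVector n σ σ' = L ↔ IsGapPattern n (sharedLevels n σ σ') L :=
  ⟨fun h => h ▸ isGapPattern_gapVector n σ σ', (isGapPattern_gapVector n σ σ').unique⟩

theorem length_gapVector (n : ℕ) (σ σ' : Equiv.Perm (Fin n)) :
    (gapVector n σ σ').length = (sharedSteps n σ σ').card + 1 := by
  simp [gapVector, gapsOfList]

theorem sum_gapVector_add_card (n : ℕ) (σ σ' : Equiv.Perm (Fin n)) :
    (gapVector n σ σ').sum + (sharedSteps n σ σ').card = n := by
  have := (isGapPattern_gapVector n σ σ').sum_add_length
  rw [length_gapVector] at this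
  omega

end GapPattern

section MeetExactlyAt

/-- Two injective families `e₁, e₂` of points have equal entries only at equal indices, and this
happens exactly at the indices in `T`. -/
structure MeetExactlyAt {κ ι : Type*} (e₁ e₂ : κ → ι) (T : Set κ) : Prop where
  injective_left : Function.Injective e₁
  injective_right : Function.Injective e₂
  eq_iff : ∀ i j, e₁ i = e₂ j ↔ i = j ∧ i ∈ T

namespace MeetExactlyAt

variable {κ ι : Type*} {e₁ e₂ : κ → ι} {T : Set κ}

theorem comp (h : MeetExactlyAt e₁ e₂ T) {κ' : Type*} {f : κ' → κ} (hf : Function.Injective f) :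
    MeetExactlyAt (e₁ ∘ f) (e₂ ∘ f) (f ⁻¹' T) where
  injective_left := h.injective_left.comp hf
  injective_right := h.injective_right.comp hf
  eq_iff i j := by simp only [Function.comp_apply, h.eq_iff, hf.eq_iff, Set.mem_preimage]

theorem disjoint_range (h : MeetExactlyAt e₁ e₂ ∅) : Disjoint (Set.range e₁) (Set.range e₂) := by
  rw [Set.disjoint_range_iff]
  exact fun i j hij => ((h.eq_iff i j).1 hij).2

theorem disjoint_range_comp (h : MeetExactlyAt e₁ e₂ T) {α β : Type*} {f : α → κ} {g : β → κ}
    (hfg : Disjoint (Set.range f) (Set.range g)) :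
    Disjoint (Set.range (e₁ ∘ f) ∪ Set.range (e₂ ∘ f))
      (Set.range (e₁ ∘ g) ∪ Set.range (e₂ ∘ g)) := by
  rw [Set.disjoint_range_iff] at hfg
  simp only [Set.disjoint_union_left, Set.disjoint_union_right, Set.disjoint_range_iff,
    Function.comp_apply, ne_eq, h.injective_left.eq_iff, h.injective_right.eq_iff, h.eq_iff,
    eq_comm (a := e₂ _) (b := e₁ _), eq_comm (a := g _) (b := f _)]
  tauto

end MeetExactlyAt

end MeetExactlyAt

section IncreasingPair

variable {ι : Type*}

/-- The weights on `ι` for which both `e₁` and `e₂` visit increasing weights in `(t, y)`. -/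
def increasingPair {n : ℕ} (e₁ e₂ : Fin n → ι) (t y : ℝ) : Set (ι → ℝ) :=
  {ω | ω ∘ e₁ ∈ increasingTuples n t y} ∩ {ω | ω ∘ e₂ ∈ increasingTuples n t y}

theorem measurableSet_increasingPair {n : ℕ} (e₁ e₂ : Fin n → ι) (t y : ℝ) :
    MeasurableSet (increasingPair e₁ e₂ t y) :=
  (measurableSet_comp_mem_increasingTuples e₁ t y).inter
    (measurableSet_comp_mem_increasingTuples e₂ t y)

theorem dependsOn_increasingPair {n : ℕ} (e₁ e₂ : Fin n → ι) (t y : ℝ) :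
    DependsOn (· ∈ increasingPair e₁ e₂ t y) (Set.range e₁ ∪ Set.range e₂) := fun _ _ h =>
  congrArg₂ And (dependsOn_comp_mem e₁ _ fun i hi => h i (.inl hi))
    (dependsOn_comp_mem e₂ _ fun i hi => h i (.inr hi))

theorem update_mem_increasingPair_iff [DecidableEq ι] {a b : ℕ} {e₁ e₂ : Fin (a + 1 + b) → ι}
    {T : Set (Fin (a + 1 + b))} (he : MeetExactlyAt e₁ e₂ T) (hT : pivot a b ∈ T) {t y : ℝ}
    (ω : ι → ℝ) (z : ℝ) :
    Function.update ω (e₁ (pivot a b)) z ∈ increasingPair e₁ e₂ t y ↔ z ∈ Set.Ioo t y ∧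
      ω ∈ increasingPair (e₁ ∘ beforePivot a b) (e₂ ∘ beforePivot a b) t z ∩
        increasingPair (e₁ ∘ afterPivot a b) (e₂ ∘ afterPivot a b) z y := by
  have hpivot : e₁ (pivot a b) = e₂ (pivot a b) := (he.eq_iff _ _).2 ⟨rfl, hT⟩
  have hsplit {e : Fin (a + 1 + b) → ι} (hinj : Function.Injective e) :
      Function.update ω (e (pivot a b)) z ∘ e ∈ increasingTuples (a + 1 + b) t y ↔
        z ∈ Set.Ioo t y ∧ ω ∘ e ∘ beforePivot a b ∈ increasingTuples a t z ∧
          ω ∘ e ∘ afterPivot a b ∈ increasingTuples b z y := by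
    rw [Function.update_comp_eq_of_injective _ hinj, update_mem_increasingTuples_pivot]
    rfl
  have h₁ := hsplit he.injective_left
  have h₂ := hsplit he.injective_right
  rw [← hpivot] at h₂
  simp only [increasingPair, Set.mem_inter_iff, Set.mem_ofPred_eq, h₁, h₂]
  tauto

variable [Fintype ι] (μ : Measure ℝ) [IsProbabilityMeasure μ]

theorem pi_increasingPair_of_disjoint {n : ℕ} {e₁ e₂ : Fin n → ι}
    (he : MeetExactlyAt e₁ e₂ ∅) (t y : ℝ) :
    Measure.pi (fun _ : ι => μ) (increasingPair e₁ e₂ t y) =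
      Measure.pi (fun _ => μ) (increasingTuples n t y) ^ 2 := by
  rw [increasingPair, pi_inter_eq_mul_of_dependsOn _ he.disjoint_range
    (measurableSet_comp_mem_increasingTuples _ _ _)
    (measurableSet_comp_mem_increasingTuples _ _ _) (dependsOn_comp_mem _ _)
    (dependsOn_comp_mem _ _), pi_comp_mem_increasingTuples μ he.injective_left,
    pi_comp_mem_increasingTuples μ he.injective_right, sq]

theorem pi_increasingPair_pivot {a b : ℕ} {e₁ e₂ : Fin (a + 1 + b) → ι}
    {T : Set (Fin (a + 1 + b))} (he : MeetExactlyAt e₁ e₂ T) (hT : pivot a b ∈ T) (t y : ℝ) :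
    Measure.pi (fun _ : ι => μ) (increasingPair e₁ e₂ t y) =
      ∫⁻ z in Set.Ioo t y,
        Measure.pi (fun _ : ι => μ)
            (increasingPair (e₁ ∘ beforePivot a b) (e₂ ∘ beforePivot a b) t z) *
          Measure.pi (fun _ : ι => μ)
            (increasingPair (e₁ ∘ afterPivot a b) (e₂ ∘ afterPivot a b) z y) ∂μ := by
  classical
  rw [pi_eq_setLIntegral_of_update_mem_iff _ (measurableSet_increasingPair e₁ e₂ t y)
    measurableSet_Ioo (update_mem_increasingPair_iff he hT)]
  refine lintegral_congr fun z => ?_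
  exact pi_inter_eq_mul_of_dependsOn _
    (he.disjoint_range_comp disjoint_range_beforePivot_afterPivot)
    (measurableSet_increasingPair _ _ _ _) (measurableSet_increasingPair _ _ _ _)
    (dependsOn_increasingPair _ _ _ _) (dependsOn_increasingPair _ _ _ _)

theorem uniform01_increasingPair {n : ℕ} {T : Set ℕ} {L : List ℕ} (hL : IsGapPattern n T L)
    {e₁ e₂ : Fin n → ι} (he : MeetExactlyAt e₁ e₂ (Fin.val ⁻¹' T)) {N : ℕ}
    (hN : 2 * L.sum + L.length = N + 1) {t : ℝ} (ht : t ∈ Set.Icc 0 1) :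
    Measure.pi (fun _ : ι => uniform01) (increasingPair e₁ e₂ t 1) =
      (L.map fun x => (2 * x).choose x).prod *
        Measure.pi (fun _ => uniform01) (increasingTuples N t 1) := by
  induction hL generalizing t N with
  | @nil n T free =>
    obtain rfl : N = 2 * n := by simp at hN; omega
    have hempty : (Fin.val ⁻¹' T : Set (Fin n)) = ∅ :=
      Set.eq_empty_of_forall_notMem fun k => free k k.2
    rw [pi_increasingPair_of_disjoint _ (hempty ▸ he),
      uniform01_increasingTuples_sq n ht.1 ht.2 le_rfl, List.map_singleton, List.prod_singleton]
  | @cons x m T L free shared tail ih =>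
    have hlen : 0 < L.length := List.length_pos_of_ne_nil tail.ne_nil
    obtain ⟨M, rfl⟩ : ∃ M, N = 2 * x + 1 + M := ⟨N - (2 * x + 1), by
      simp only [List.sum_cons, List.length_cons] at hN; omega⟩
    have hM : 2 * L.sum + L.length = M + 1 := by
      simp only [List.sum_cons, List.length_cons] at hN; omega
    have hempty : beforePivot x m ⁻¹' (Fin.val ⁻¹' T) = ∅ :=
      Set.eq_empty_of_forall_notMem fun k => free k k.2
    rw [pi_increasingPair_pivot _ he shared, pi_increasingTuples_pivot,
      ← lintegral_const_mul' _ _ (ENNReal.natCast_ne_top _)]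
    refine setLIntegral_congr_fun measurableSet_Ioo fun z hz => ?_
    have hz' : z ∈ Set.Icc 0 1 := ⟨ht.1.trans hz.1.le, hz.2.le⟩
    simp only [ih (he.comp afterPivot_injective) hM hz',
      pi_increasingPair_of_disjoint _ (hempty ▸ he.comp beforePivot_injective),
      uniform01_increasingTuples_sq x ht.1 hz.1.le hz.2.le, List.map_cons, List.prod_cons,
      Nat.cast_mul]
    ring

end IncreasingPair

section PairProbability

theorem card_initSeg (n : ℕ) (σ : Equiv.Perm (Fin n)) (j : Fin n) : (initSeg n σ j).card = j := by
  rw [initSeg, Finset.card_image_of_injective _ σ.injective, Finset.filter_gt_eq_Iio,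
    Fin.card_Iio]

theorem eq_of_pathEdge_eq {n : ℕ} {σ σ' : Equiv.Perm (Fin n)} {i j : Fin n}
    (h : pathEdge n σ i = pathEdge n σ' j) : i = j := by
  have hcard := congrArg (fun e => e.1.card) h
  simp only [pathEdge, card_initSeg] at hcard
  exact Fin.ext hcard

theorem meetExactlyAt_pathEdge (n : ℕ) (σ σ' : Equiv.Perm (Fin n)) :
    MeetExactlyAt (pathEdge n σ) (pathEdge n σ') (Fin.val ⁻¹' sharedLevels n σ σ') where
  injective_left _ _ := eq_of_pathEdge_eq
  injective_right _ _ := eq_of_pathEdge_eq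
  eq_iff i j := by
    rw [Set.mem_preimage, val_mem_sharedLevels, sharedSteps, Finset.mem_filter_univ]
    refine ⟨fun h => ?_, fun ⟨hij, h⟩ => hij ▸ h⟩
    obtain rfl := eq_of_pathEdge_eq h
    exact ⟨rfl, h⟩

theorem ae_pi_uniform01_mem_Ioo (ι : Type*) [Fintype ι] :
    ∀ᵐ ω ∂Measure.pi fun _ : ι => uniform01, ∀ e, ω e ∈ Set.Ioo (0 : ℝ) 1 := by
  have hmem : ∀ᵐ z ∂uniform01, z ∈ Set.Ioo (0 : ℝ) 1 := by
    rw [uniform01, ← restrict_Ioo_eq_restrict_Icc]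
    exact ae_restrict_mem measurableSet_Ioo
  exact ae_all_iff.2 fun e =>
    (measurePreserving_eval (fun _ : ι => uniform01) e).quasiMeasurePreserving.ae hmem

theorem cubeMeasure_accessible_pair (n : ℕ) (σ σ' : Equiv.Perm (Fin n)) :
    cubeMeasure n {ω | Accessible n σ ω ∧ Accessible n σ' ω} =
      Measure.pi (fun _ => uniform01) (increasingPair (pathEdge n σ) (pathEdge n σ') 0 1) := by
  refine measure_congr ?_
  filter_upwards [ae_pi_uniform01_mem_Ioo (EdgeIdx n)] with ω hω
  exact propext (and_congr (and_iff_left fun _ => hω _).symm (and_iff_left fun _ => hω _).symm)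

theorem pairProb_eq (n : ℕ) (σ σ' : Equiv.Perm (Fin n)) :
    pairProb n σ σ' = ((gapVector n σ σ').map fun x => (2 * x).choose x).prod /
      (2 * n - (sharedSteps n σ σ').card).factorial := by
  have hsum := sum_gapVector_add_card n σ σ'
  have hlen := length_gapVector n σ σ'
  rw [pairProb, cubeMeasure_accessible_pair,
    uniform01_increasingPair (isGapPattern_gapVector n σ σ') (meetExactlyAt_pathEdge n σ σ')
      (N := 2 * n - (sharedSteps n σ σ').card) (by omega) ⟨le_rfl, zero_le_one⟩,
    uniform01_increasingTuples _ le_rfl zero_le_one le_rfl, ENNReal.toReal_mul,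
    ENNReal.toReal_natCast, ENNReal.toReal_ofReal (by positivity), sub_zero, one_pow,
    mul_one_div]

end PairProbability

section Counting

theorem sharedSteps_mul (n : ℕ) (σ τ : Equiv.Perm (Fin n)) :
    sharedSteps n σ (σ * τ) = sharedSteps n τ 1 := by
  ext j
  simp only [sharedSteps, Finset.mem_filter_univ, pathEdge, initSeg, Prod.mk.injEq,
    Equiv.Perm.coe_mul, Equiv.Perm.coe_one, Function.comp_apply, Finset.image_id, id_eq]
  rw [← Finset.image_image, (Finset.image_injective σ.injective).eq_iff, σ.injective.eq_iff,
    eq_comm, eq_comm (a := j)]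

theorem mem_sharedSteps_one_iff {n : ℕ} {τ : Equiv.Perm (Fin n)} {j : Fin n} :
    j ∈ sharedSteps n τ 1 ↔ τ j = j ∧ ∀ i < j, τ i < j := by
  have hone : initSeg n 1 j = Finset.univ.filter (· < j) := by simp [initSeg]
  have hseg : initSeg n τ j = initSeg n 1 j ↔ ∀ i < j, τ i < j := by
    rw [← Finset.subset_iff_eq_of_card_le (by rw [card_initSeg, card_initSeg]), hone, initSeg,
      Finset.image_subset_iff]
    simp only [Finset.mem_filter_univ]
  rw [sharedSteps, Finset.mem_filter_univ, pathEdge, pathEdge, Prod.mk.injEq, hseg, and_comm,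
    Equiv.Perm.coe_one, id]

theorem mem_sharedLevels_one_iff {n : ℕ} {τ : Equiv.Perm (Fin n)} {k : ℕ} :
    k ∈ sharedLevels n τ 1 ↔
      ∃ h : k < n, τ ⟨k, h⟩ = ⟨k, h⟩ ∧ ∀ i : Fin n, (i : ℕ) < k → (τ i : ℕ) < k := by
  constructor
  · rintro ⟨j, hj, rfl⟩
    exact ⟨j.2, mem_sharedSteps_one_iff.1 hj⟩
  · rintro ⟨h, hk⟩
    exact val_mem_sharedLevels (j := ⟨k, h⟩).2 (mem_sharedSteps_one_iff.2 hk)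

theorem forall_notMem_sharedLevels_iff {n : ℕ} {σ σ' : Equiv.Perm (Fin n)} :
    (∀ k < n, k ∉ sharedLevels n σ σ') ↔ sharedSteps n σ σ' = ∅ := by
  rw [Finset.eq_empty_iff_forall_notMem, Fin.forall_iff]
  exact forall₂_congr fun k hk => not_congr (val_mem_sharedLevels (j := ⟨k, hk⟩))

/-- The permutation of `Fin (a + b)` acting as `τ₁` on the first `a` indices and as `τ₂` on the
last `b`: the direct path running through `τ₁` and then through `τ₂`. -/
def joinPerm {a b : ℕ} (τ₁ : Equiv.Perm (Fin a)) (τ₂ : Equiv.Perm (Fin b)) :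
    Equiv.Perm (Fin (a + b)) :=
  finSumFinEquiv.permCongr (Equiv.Perm.sumCongr τ₁ τ₂)

section JoinPerm

variable {a b : ℕ} (τ₁ : Equiv.Perm (Fin a)) (τ₂ : Equiv.Perm (Fin b))

@[simp] theorem joinPerm_castAdd (i : Fin a) :
    joinPerm τ₁ τ₂ (Fin.castAdd b i) = Fin.castAdd b (τ₁ i) := by
  simp [joinPerm, Equiv.permCongr_apply]

@[simp] theorem joinPerm_natAdd (i : Fin b) :
    joinPerm τ₁ τ₂ (Fin.natAdd a i) = Fin.natAdd a (τ₂ i) := by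
  simp [joinPerm, Equiv.permCongr_apply]

theorem joinPerm_injective2 : Function.Injective2 (joinPerm (a := a) (b := b)) :=
  fun τ₁ τ₁' τ₂ τ₂' h => Prod.mk_inj.1 <| Equiv.Perm.sumCongrHom_injective (a₁ := (τ₁, τ₂))
    (a₂ := (τ₁', τ₂')) (finSumFinEquiv.permCongr.injective h)

theorem exists_joinPerm_eq {τ : Equiv.Perm (Fin (a + b))}
    (hτ : ∀ i : Fin (a + b), (i : ℕ) < a → (τ i : ℕ) < a) : ∃ τ₁ τ₂, joinPerm τ₁ τ₂ = τ := by
  obtain ⟨⟨τ₁, τ₂⟩, h⟩ : finSumFinEquiv.symm.permCongr τ ∈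
      (Equiv.Perm.sumCongrHom (Fin a) (Fin b)).range := by
    refine Equiv.Perm.mem_sumCongrHom_range_of_perm_mapsTo_inl ?_
    rintro _ ⟨i, rfl⟩
    refine ⟨⟨_, hτ (Fin.castAdd b i) i.2⟩, ?_⟩
    rw [Equiv.permCongr_apply, Equiv.eq_symm_apply]
    rfl
  exact ⟨τ₁, τ₂, (Equiv.symm_apply_eq finSumFinEquiv.symm.permCongr).2 h⟩

theorem mem_sharedLevels_joinPerm_of_lt {k : ℕ} (hk : k < a) :
    k ∈ sharedLevels (a + b) (joinPerm τ₁ τ₂) 1 ↔ k ∈ sharedLevels a τ₁ 1 := by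
  have hcast : (⟨k, by omega⟩ : Fin (a + b)) = Fin.castAdd b ⟨k, hk⟩ := rfl
  simp only [mem_sharedLevels_one_iff, Fin.forall_fin_add, hcast, joinPerm_castAdd,
    joinPerm_natAdd, Fin.castAdd_inj, Fin.val_castAdd, Fin.val_natAdd]
  grind

theorem add_mem_sharedLevels_joinPerm {k : ℕ} :
    a + k ∈ sharedLevels (a + b) (joinPerm τ₁ τ₂) 1 ↔ k ∈ sharedLevels b τ₂ 1 := by
  have hcast (h : a + k < a + b) : (⟨a + k, h⟩ : Fin (a + b)) = Fin.natAdd a ⟨k, by omega⟩ := rfl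
  simp only [mem_sharedLevels_one_iff, Fin.forall_fin_add, hcast, joinPerm_castAdd,
    joinPerm_natAdd, Fin.natAdd_inj, Fin.val_castAdd, Fin.val_natAdd]
  grind

end JoinPerm

section Block

variable {x m : ℕ}

theorem exists_joinPerm_joinPerm_eq {τ : Equiv.Perm (Fin (x + 1 + m))}
    (hx : x ∈ sharedLevels (x + 1 + m) τ 1) :
    ∃ τ₁ τ₂, joinPerm (joinPerm τ₁ (1 : Equiv.Perm (Fin 1))) τ₂ = τ := by
  obtain ⟨hxn, hfix, hlt⟩ := mem_sharedLevels_one_iff.1 hx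
  obtain ⟨τ', τ₂, rfl⟩ := exists_joinPerm_eq (a := x + 1) (b := m) (τ := τ) fun i hi => by
    obtain hi | hi := Nat.lt_succ_iff_lt_or_eq.1 hi
    · exact (hlt i hi).trans x.lt_succ_self
    · rw [show i = ⟨x, hxn⟩ from Fin.ext hi, hfix]
      exact x.lt_succ_self
  rw [mem_sharedLevels_joinPerm_of_lt _ _ x.lt_succ_self] at hx
  obtain ⟨τ₁, ρ, rfl⟩ := exists_joinPerm_eq (a := x) (b := 1) (mem_sharedLevels_one_iff.1 hx).2.2
  exact ⟨τ₁, τ₂, by rw [Subsingleton.elim ρ 1]⟩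

theorem isGapPattern_joinPerm_joinPerm_iff {τ₁ : Equiv.Perm (Fin x)} {τ₂ : Equiv.Perm (Fin m)}
    {L : List ℕ} :
    IsGapPattern (x + 1 + m)
        (sharedLevels _ (joinPerm (joinPerm τ₁ (1 : Equiv.Perm (Fin 1))) τ₂) 1) (x :: L) ↔
      sharedSteps x τ₁ 1 = ∅ ∧ IsGapPattern m (sharedLevels m τ₂ 1) L := by
  set τ := joinPerm (joinPerm τ₁ (1 : Equiv.Perm (Fin 1))) τ₂
  have hfree : (∀ k < x, k ∉ sharedLevels _ τ 1) ↔ sharedSteps x τ₁ 1 = ∅ := by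
    rw [← forall_notMem_sharedLevels_iff]
    refine forall₂_congr fun k hk => not_congr ?_
    rw [mem_sharedLevels_joinPerm_of_lt _ _ (by omega), mem_sharedLevels_joinPerm_of_lt _ _ hk]
  have hshared : x ∈ sharedLevels _ τ 1 := by
    rw [mem_sharedLevels_joinPerm_of_lt _ _ x.lt_succ_self]
    exact (add_mem_sharedLevels_joinPerm τ₁ _ (k := 0)).2
      (mem_sharedLevels_one_iff.2 ⟨one_pos, rfl, by simp⟩)
  have htail : (x + 1 + ·) ⁻¹' sharedLevels _ τ 1 = sharedLevels m τ₂ 1 :=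
    Set.ext fun k => add_mem_sharedLevels_joinPerm _ _
  rw [isGapPattern_cons_iff, hfree, htail, and_iff_right hshared]

theorem card_isGapPattern_cons (x m : ℕ) (L : List ℕ) :
    Nat.card {τ // IsGapPattern (x + 1 + m) (sharedLevels (x + 1 + m) τ 1) (x :: L)} =
      w x * Nat.card {τ // IsGapPattern m (sharedLevels m τ 1) L} := by
  rw [w, ← Nat.card_prod]
  refine (Nat.card_congr (Equiv.ofBijective (fun p => ⟨joinPerm (joinPerm p.1.1 1) p.2.1,
    isGapPattern_joinPerm_joinPerm_iff.2 ⟨p.1.2, p.2.2⟩⟩) ⟨?_, ?_⟩)).symm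
  · rintro ⟨⟨τ₁, _⟩, τ₂, _⟩ ⟨⟨τ₁', _⟩, τ₂', _⟩ h
    obtain ⟨h₁, rfl⟩ := joinPerm_injective2 (Subtype.ext_iff.1 h)
    obtain ⟨rfl, -⟩ := joinPerm_injective2 h₁
    rfl
  · rintro ⟨τ, hτ⟩
    obtain ⟨τ₁, τ₂, rfl⟩ := exists_joinPerm_joinPerm_eq (isGapPattern_cons_iff.1 hτ).2.1
    obtain ⟨h₁, h₂⟩ := isGapPattern_joinPerm_joinPerm_iff.1 hτ
    exact ⟨⟨⟨τ₁, h₁⟩, τ₂, h₂⟩, rfl⟩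

end Block

theorem card_isGapPattern {L : List ℕ} (hL : L ≠ []) {n : ℕ} (hn : L.sum + L.length = n + 1) :
    Nat.card {τ // IsGapPattern n (sharedLevels n τ 1) L} = (L.map w).prod := by
  induction L generalizing n with
  | nil => exact absurd rfl hL
  | cons x L ih =>
    rw [List.sum_cons, List.length_cons] at hn
    obtain rfl | hne := eq_or_ne L []
    · obtain rfl : n = x := by simpa using hn.symm
      simp only [isGapPattern_singleton_iff, true_and, forall_notMem_sharedLevels_iff,
        List.map_singleton, List.prod_singleton, w]
    · have hlen := List.length_pos_of_ne_nil hne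
      obtain ⟨m, rfl⟩ : ∃ m, n = x + 1 + m := ⟨n - (x + 1), by omega⟩
      rw [card_isGapPattern_cons, ih hne (by omega), List.map_cons, List.prod_cons]

theorem card_gapVector_eq {L : List ℕ} (hL : L ≠ []) {n : ℕ} (hn : L.sum + L.length = n + 1) :
    (Finset.univ.filter fun p : Equiv.Perm (Fin n) × Equiv.Perm (Fin n) =>
      gapVector n p.1 p.2 = L).card = n.factorial * (L.map w).prod := by
  have hmul (σ τ : Equiv.Perm (Fin n)) :
      IsGapPattern n (sharedLevels n τ 1) L ↔ gapVector n σ (σ * τ) = L := by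
    rw [gapVector_eq_iff, sharedLevels, sharedLevels, sharedSteps_mul]
  have hσ (σ : Equiv.Perm (Fin n)) :
      (Finset.univ.filter fun σ' => gapVector n σ σ' = L).card = (L.map w).prod := by
    rw [← card_isGapPattern hL hn, Nat.card_congr ((Equiv.mulLeft σ).subtypeEquiv
      (q := fun σ' => gapVector n σ σ' = L) (hmul σ)), Nat.card_eq_fintype_card,
      Fintype.card_subtype]
  rw [Finset.card_filter, Fintype.sum_prod_type]
  simp only [← Finset.card_filter, hσ, Finset.sum_const, Finset.card_univ, Fintype.card_perm,
    Fintype.card_fin, smul_eq_mul]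

theorem w_zero : w 0 = 1 := by
  simp [w, Finset.eq_empty_of_isEmpty]

theorem w_one : w 1 = 0 := by
  have hshared (σ : Equiv.Perm (Fin 1)) : sharedSteps 1 σ 1 ≠ ∅ := by
    rw [Subsingleton.elim σ 1]
    exact Finset.ne_empty_of_mem (mem_sharedSteps_one_iff.2 ⟨rfl, by simp⟩ : (0 : Fin 1) ∈ _)
  simp [w, hshared]

end Counting

section NonzeroGaps

open Finset PowerSeries

theorem coeff_prod_eq_sum_piAntidiag {ι R : Type*} [Fintype ι] [DecidableEq ι] [CommSemiring R]
    (f : ι → R⟦X⟧) (N : ℕ) :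
    coeff N (∏ i, f i) = ∑ x ∈ piAntidiag univ N, ∏ i, coeff (x i) (f i) := by
  rw [coeff_prod]
  refine sum_bij' (fun x _ => x) (fun x _ => Finsupp.equivFunOnFinite.symm x) ?_ ?_ ?_ ?_ ?_ <;>
    simp +contextual [mem_finsuppAntidiag, mem_piAntidiag]

variable {R : Type*} [CommSemiring R] (φ : ℕ → R)

/-- The generating function of the weights `φ x` of the nonzero gaps `x`. -/
noncomputable def gapSeries : R⟦X⟧ := PowerSeries.mk fun x => if x = 0 then 0 else φ x

variable {φ}

theorem sum_prod_filter_support_eq {ι : Type*} [Fintype ι] [DecidableEq ι] (h0 : φ 0 = 1) (N : ℕ)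
    (S : Finset ι) :
    ∑ x ∈ piAntidiag univ N with univ.filter (x · ≠ 0) = S, ∏ i, φ (x i) =
      coeff N (gapSeries φ ^ #S) := by
  have hpow : gapSeries φ ^ #S = ∏ i, if i ∈ S then gapSeries φ else 1 := by
    rw [prod_ite_mem, univ_inter, prod_const]
  rw [hpow, coeff_prod_eq_sum_piAntidiag, sum_filter]
  refine sum_congr rfl fun x _ => ?_
  split_ifs with hx
  · subst hx
    refine prod_congr rfl fun i _ => ?_
    by_cases hi : x i = 0 <;> simp [gapSeries, coeff_one, hi, h0]
  · obtain ⟨i, hi⟩ := not_forall.1 (mt Finset.ext hx)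
    refine (prod_eq_zero (mem_univ i) ?_).symm
    by_cases hxi : x i = 0 <;> by_cases hiS : i ∈ S <;>
      simp_all [gapSeries, coeff_one]

theorem sum_prod_filter_card_support_eq {ι : Type*} [Fintype ι] [DecidableEq ι] (h0 : φ 0 = 1)
    (N g : ℕ) :
    ∑ x ∈ piAntidiag univ N with #(univ.filter fun i : ι => x i ≠ 0) = g, ∏ i, φ (x i) =
      (Fintype.card ι).choose g * coeff N (gapSeries φ ^ g) := by
  have hmaps : ∀ x ∈ (piAntidiag univ N).filter fun x => #(univ.filter fun i : ι => x i ≠ 0) = g,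
      univ.filter (x · ≠ 0) ∈ powersetCard g univ := fun x hx =>
    mem_powersetCard_univ.2 (mem_filter.1 hx).2
  rw [← sum_fiberwise_of_maps_to hmaps, ← card_univ, ← card_powersetCard, ← nsmul_eq_mul]
  refine sum_eq_card_nsmul fun S hS => ?_
  obtain rfl := mem_powersetCard_univ.1 hS
  rw [← sum_prod_filter_support_eq h0, filter_filter]
  refine sum_congr (filter_congr fun x _ => ?_) fun _ _ => rfl
  exact and_iff_right_of_imp (congrArg card)

theorem coeff_gapSeries_pow (h1 : φ 1 = 0) (N g : ℕ) :
    coeff N (gapSeries φ ^ g) =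
      ∑ x : Fin g → Fin (N + 1) with ∑ i, (x i : ℕ) = N ∧ ∀ i, 2 ≤ (x i : ℕ),
        ∏ i, φ (x i) := by
  have hcoeff (k : ℕ) : coeff k (gapSeries φ) = if 2 ≤ k then φ k else 0 := by
    obtain - | - | k := k <;> simp [gapSeries, h1]
  have hpow : gapSeries φ ^ g = ∏ _ : Fin g, gapSeries φ := by simp
  rw [hpow, coeff_prod_eq_sum_piAntidiag]
  simp only [hcoeff, prod_ite_zero, mem_univ, true_implies]
  rw [← sum_filter]
  have hle {x : Fin g → ℕ} (hx : ∑ i, x i = N) (i : Fin g) : x i < N + 1 :=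
    Nat.lt_succ_of_le (hx ▸ single_le_sum (fun _ _ => Nat.zero_le _) (mem_univ i))
  refine sum_bij' (fun x hx i => ⟨x i, hle (by simp_all) i⟩) (fun x _ i => x i) ?_ ?_ ?_ ?_ ?_ <;>
    simp +contextual [mem_piAntidiag]

end NonzeroGaps

section PairSum

open Finset PowerSeries

/-- The weight of a gap `x` in the pair sum: the `w x` ways for the second path to leave the first
on `x` consecutive steps, each with probability factor `(2 * x).choose x`. -/
noncomputable def gapWeight (x : ℕ) : ℝ := w x * ((2 * x).choose x : ℕ)

theorem gapWeight_zero : gapWeight 0 = 1 := by simp [gapWeight, w_zero]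

theorem gapWeight_one : gapWeight 1 = 0 := by simp [gapWeight, w_one]

theorem length_filter_ne_zero_ofFn {k : ℕ} (x : Fin k → ℕ) :
    ((List.ofFn x).filter (· != 0)).length = #(univ.filter fun i => x i ≠ 0) := by
  rw [List.ofFn_eq_map, List.filter_map, List.length_map, ← List.toFinset_card_of_nodup
    ((List.nodup_finRange k).filter _), List.toFinset_filter, List.toFinset_finRange]
  simp

theorem gapVector_mem_image_ofFn_iff {n s g : ℕ} {σ σ' : Equiv.Perm (Fin n)} :
    gapVector n σ σ' ∈ ((piAntidiag univ (n - s)).filter fun x : Fin (s + 1) → ℕ =>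
      #(univ.filter fun i => x i ≠ 0) = g).image List.ofFn ↔
      (sharedSteps n σ σ').card = s ∧ numGaps n σ σ' = g := by
  have hlen := length_gapVector n σ σ'
  have hsum := sum_gapVector_add_card n σ σ'
  simp only [mem_image, mem_filter, mem_piAntidiag, mem_univ, implies_true, and_true]
  constructor
  · rintro ⟨x, ⟨-, hg⟩, hx⟩
    rw [← hx, List.length_ofFn] at hlen
    rw [numGaps, ← hx, length_filter_ne_zero_ofFn]
    exact ⟨(Nat.succ_injective hlen).symm, hg⟩
  · rintro ⟨rfl, hg⟩
    obtain ⟨x, hx⟩ : ∃ x : Fin ((sharedSteps n σ σ').card + 1) → ℕ,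
        List.ofFn x = gapVector n σ σ' := hlen ▸ ⟨_, List.ofFn_get _⟩
    rw [numGaps, ← hx, length_filter_ne_zero_ofFn] at hg
    rw [← hx, List.sum_ofFn] at hsum
    exact ⟨x, ⟨Nat.eq_sub_of_add_eq hsum, hg⟩, hx⟩

theorem sum_pairProb_gapVector_eq {n s : ℕ} (hs : s ≤ n) {x : Fin (s + 1) → ℕ}
    (hx : ∑ i, x i = n - s) :
    ∑ p : Equiv.Perm (Fin n) × Equiv.Perm (Fin n) with gapVector n p.1 p.2 = List.ofFn x,
        pairProb n p.1 p.2 =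
      (n.factorial / (2 * n - s).factorial : ℝ) * ∏ i, gapWeight (x i) := by
  have hprob : ∀ p ∈ univ.filter fun p : Equiv.Perm (Fin n) × Equiv.Perm (Fin n) =>
      gapVector n p.1 p.2 = List.ofFn x, pairProb n p.1 p.2 =
        (∏ i, ((2 * x i).choose (x i) : ℝ)) / (2 * n - s).factorial := fun p hp => by
    have hp := (mem_filter.1 hp).2
    have hcard : (sharedSteps n p.1 p.2).card = s := by
      simpa [hp, eq_comm] using length_gapVector n p.1 p.2
    rw [pairProb_eq, hp, hcard, List.map_ofFn, List.prod_ofFn, Nat.cast_prod]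
    rfl
  have hcard := card_gapVector_eq (L := List.ofFn x) (n := n) (by simp)
    (by rw [List.sum_ofFn, List.length_ofFn]; omega)
  rw [sum_congr rfl hprob, sum_const, hcard, List.map_ofFn, List.prod_ofFn, nsmul_eq_mul]
  simp only [gapWeight, prod_mul_distrib, Function.comp_apply]
  push_cast
  ring

theorem c_eq_coeff_gapSeries_pow {n s : ℕ} (hs : s ≤ n) (g : ℕ) :
    c n s g = (s + 1).choose g * (n.factorial / (2 * n - s).factorial : ℝ) *
      coeff (n - s) (gapSeries gapWeight ^ g) := by
  have hcount := sum_prod_filter_card_support_eq (ι := Fin (s + 1)) gapWeight_zero (n - s) g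
  rw [Fintype.card_fin] at hcount
  simp only [c, ← gapVector_mem_image_ofFn_iff]
  rw [← sum_fiberwise_of_maps_to fun p hp => (mem_filter.1 hp).2,
    sum_image List.ofFn_injective.injOn, mul_right_comm, ← hcount, mul_comm, mul_sum]
  refine sum_congr rfl fun x hx => ?_
  rw [← sum_pairProb_gapVector_eq hs (mem_piAntidiag.1 (mem_filter.1 hx).1).1, filter_filter]
  refine sum_congr (filter_congr fun p _ => and_iff_right_of_imp fun hp => ?_) fun _ _ => rfl
  exact hp ▸ mem_image_of_mem _ hx

end PairSum

end RandomHypercube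

open RandomHypercube in
/-- Explicit expression for the pair sum `c_{s,g}` in terms of compositions of `n - s`
into `g` parts each at least `2` and the edge-disjoint path counts `w`. -/
theorem c_eq_composition_sum (n s g : ℕ) (hn : 1 ≤ n) (hs : s ≤ n - 2)
    (hg1 : 1 ≤ g) (hg2 : g ≤ min (s + 1) ((n - s) / 2)) :
    c n s g
      = ((s + 1).choose g : ℝ) * ((n.factorial : ℝ) / ((2 * n - s).factorial : ℝ))
        * ∑ x ∈ (Finset.univ : Finset (Fin g → Fin (n - s + 1))).filter
            (fun x => (∑ i, ((x i : ℕ))) = n - s ∧ ∀ i, 2 ≤ ((x i : ℕ))),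
          ∏ i, (w ((x i : ℕ)) : ℝ) * (((2 * ((x i : ℕ))).choose ((x i : ℕ)) : ℕ) : ℝ) := by
  rw [c_eq_coeff_gapSeries_pow (by omega), coeff_gapSeries_pow gapWeight_one]
  simp only [gapWeight]
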